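/- arXiv:2401.10086 — 2 statements merged into one kernel-verified Lean document; each statement's English description precedes it below -/
import Mathlib

section
/- Let n ≥ 3 be an integer. For every ε > 0 there exists a constant C = C(n, ε) such that for all real H ≥ 2 and all δ ∈ ℚ, the number of n×n matrices with all entries in F(H) and with determinant equal to δ is at most C·H^{2n²−n+ε}. -/
/-- The set of rationals `a/b` in lowest terms with `|a| ≤ H` and `1 ≤ b ≤ H`. -/
def Farey (H : ℝ) : Set ℚ := {x : ℚ | |(x.num : ℝ)| ≤ H ∧ (x.den : ℝ) ≤ H}


lemma divisor_bound (ε : ℝ) (hε : 0 < ε) : ∃ C : ℝ, 1 ≤ C ∧ ∀ m : ℕ, m ≠ 0 →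
    (m.divisors.card : ℝ) ≤ C * (m : ℝ) ^ ε := by
  -- small prime constant
  obtain ⟨K, hK1, hK⟩ : ∃ K : ℝ, 1 ≤ K ∧ ∀ v : ℕ, (v : ℝ) + 1 ≤ K * ((2 : ℝ) ^ v) ^ ε := by
    refine ⟨1 + 1 / (ε * Real.log 2), ?_, ?_⟩
    · have : 0 < Real.log 2 := Real.log_pos (by norm_num)
      have : 0 < 1 / (ε * Real.log 2) := by positivity
      linarith
    · intro v
      have hl : 0 < Real.log 2 := Real.log_pos (by norm_num)
      have h1 : ((2 : ℝ) ^ v) ^ ε = Real.exp (v * (ε * Real.log 2)) := by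
        rw [Real.rpow_def_of_pos (by positivity), Real.log_pow]
        ring_nf
      have h2 := Real.add_one_le_exp (v * (ε * Real.log 2))
      rw [h1]
      have hc : 0 < ε * Real.log 2 := by positivity
      have h3 : 1 / (ε * Real.log 2) * (v * (ε * Real.log 2)) = v := by
        field_simp
      have hv : (0 : ℝ) ≤ v * (ε * Real.log 2) := by positivity
      have hd : 0 < 1 / (ε * Real.log 2) := by positivity
      nlinarith [mul_le_mul_of_nonneg_left h2 (by linarith : 0 ≤ 1 + 1 / (ε * Real.log 2))]
  obtain ⟨P, hP⟩ := exists_nat_ge ((2 : ℝ) ^ (1 / ε))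
  refine ⟨K ^ P, one_le_pow₀ hK1, ?_⟩
  intro m hm
  rw [Nat.card_divisors hm]
  push_cast
  have hstep : ∀ p ∈ m.primeFactors, ((m.factorization p : ℝ) + 1) ≤
      (if p < P then K else 1) * ((p : ℝ) ^ (m.factorization p)) ^ ε := by
    intro p hp
    have hp' := Nat.prime_of_mem_primeFactors hp
    have hp2 : (2 : ℝ) ≤ p := by exact_mod_cast hp'.two_le
    split_ifs with h
    · refine (hK _).trans ?_
      gcongr
    · have hpP : (2 : ℝ) ^ (1 / ε) ≤ p := hP.trans (by exact_mod_cast not_lt.mp h)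
      have : (2 : ℝ) ≤ (p : ℝ) ^ ε := by
        calc (2 : ℝ) = ((2 : ℝ) ^ (1 / ε)) ^ ε := by
              rw [← Real.rpow_mul (by norm_num)]; field_simp; simp
          _ ≤ _ := by gcongr
      rw [one_mul, ← Real.rpow_natCast, ← Real.rpow_mul (by positivity), mul_comm, Real.rpow_mul (by positivity), Real.rpow_natCast]
      calc ((m.factorization p : ℝ) + 1) ≤ 2 ^ (m.factorization p) := by
            exact_mod_cast (Nat.lt_two_pow_self (n := m.factorization p))
        _ ≤ _ := by gcongr
  calc ∏ p ∈ m.primeFactors, ((m.factorization p : ℝ) + 1)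
      ≤ ∏ p ∈ m.primeFactors, ((if p < P then K else 1) * ((p : ℝ) ^ (m.factorization p)) ^ ε) :=
        Finset.prod_le_prod (fun _ _ => by positivity) hstep
    _ = (∏ p ∈ m.primeFactors, (if p < P then K else 1)) *
          (∏ p ∈ m.primeFactors, ((p : ℝ) ^ (m.factorization p))) ^ ε := by
        rw [Finset.prod_mul_distrib, ← Real.finsetProd_rpow]
        intros; positivity
    _ ≤ _ := by
        have e : (∏ p ∈ m.primeFactors, ((p : ℝ) ^ (m.factorization p))) = m := by
          have := Nat.prod_factorization_pow_eq_self hm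
          conv_rhs => rw [← this]
          rw [Finsupp.prod, Nat.support_factorization]
          push_cast; rfl
        rw [e]
        gcongr
        rw [Finset.prod_ite, Finset.prod_const, Finset.prod_const_one, mul_one]
        apply pow_le_pow_right₀ hK1
        calc _ ≤ (Finset.range P).card := Finset.card_le_card (by
                intro x; simp)
          _ = P := by simp

lemma gcd_sum (h m : ℕ) (hm : m ≠ 0) :
    ∑ s ∈ Finset.Icc 1 h, ((Nat.gcd s m : ℝ) / s) ≤ m.divisors.card * (1 + Real.log h) := by
  have h1 : ∀ s ∈ Finset.Icc 1 h, ((Nat.gcd s m : ℝ) / s) ≤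
      ∑ d ∈ m.divisors, if d ∣ s then (d : ℝ) / s else 0 := by
    intro s hs
    have hmem : Nat.gcd s m ∈ m.divisors := by
      simp [hm, Nat.gcd_dvd_right]
    have := Finset.single_le_sum (f := fun d : ℕ => if d ∣ s then (d : ℝ) / s else 0)
      (fun i _ => by positivity) hmem
    simpa [Nat.gcd_dvd_left] using this
  refine (Finset.sum_le_sum h1).trans ?_
  rw [Finset.sum_comm]
  have h2 : ∀ d ∈ m.divisors, ∑ s ∈ Finset.Icc 1 h, (if d ∣ s then (d : ℝ) / s else 0) ≤ 1 + Real.log h := by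
    intro d hd
    have hd0 : 0 < d := Nat.pos_of_mem_divisors hd
    refine le_trans ?_ (harmonic_le_one_add_log h)
    rw [harmonic_eq_sum_Icc]
    push_cast
    rw [← Finset.sum_filter]
    have hinj : Set.InjOn (fun t : ℕ => t * d) (Finset.Icc 1 h : Set ℕ) := by
      intro a _ b _ hab
      exact Nat.eq_of_mul_eq_mul_right hd0 hab
    have himg : ∑ t ∈ Finset.Icc 1 h, ((t : ℝ))⁻¹ =
        ∑ s ∈ (Finset.Icc 1 h).image (fun t : ℕ => t * d), (d : ℝ) / s := by
      rw [Finset.sum_image hinj]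
      refine Finset.sum_congr rfl fun t ht => ?_
      have : (0 : ℝ) < t := by
        have := (Finset.mem_Icc.mp ht).1
        exact_mod_cast this
      have : (0 : ℝ) < d := by exact_mod_cast hd0
      push_cast
      field_simp
    rw [himg]
    refine Finset.sum_le_sum_of_subset_of_nonneg ?_ (fun _ _ _ => by positivity)
    intro s hs
    rw [Finset.mem_filter, Finset.mem_Icc] at hs
    obtain ⟨⟨hs1, hs2⟩, t, rfl⟩ := hs
    rw [Finset.mem_image]
    refine ⟨t, ?_, mul_comm _ _⟩
    rw [Finset.mem_Icc]
    constructor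
    · by_contra hc
      have : t = 0 := by omega
      simp [this] at hs1
    · nlinarith
  calc _ ≤ ∑ d ∈ m.divisors, (1 + Real.log h) := Finset.sum_le_sum h2
    _ = _ := by rw [Finset.sum_const, nsmul_eq_mul]

/-- the number of integers in a box in one residue class -/
lemma card_class (h q : ℕ) (hq : 1 ≤ q) (hqh : q ≤ h) (T : Finset ℤ)
    (hT : T ⊆ Finset.Icc (-(h : ℤ)) h) (hd : ∀ x ∈ T, ∀ y ∈ T, (q : ℤ) ∣ x - y) :
    (T.card : ℝ) ≤ 3 * h / q := by
  rcases T.eq_empty_or_nonempty with rfl | hne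
  · simp; positivity
  set x0 := T.min' hne
  have hx0 : x0 ∈ T := T.min'_mem hne
  have hc : T.card ≤ (Finset.Icc (0 : ℤ) ((2 * h) / q)).card := by
    refine Finset.card_le_card_of_injOn (fun x => (x - x0) / q) ?_ ?_
    · intro x hx
      have h1 : x0 ≤ x := T.min'_le x hx
      have h2 := Finset.mem_Icc.mp (hT hx)
      have h3 := Finset.mem_Icc.mp (hT hx0)
      simp only [Finset.coe_Icc, Set.mem_Icc]
      constructor
      · apply Int.ediv_nonneg <;> omega
      · apply Int.ediv_le_ediv <;> omega
    · intro x hx y hy hxy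
      have h1 := Int.ediv_mul_cancel (hd x hx x0 hx0)
      have h2 := Int.ediv_mul_cancel (hd y hy x0 hx0)
      simp only at hxy
      rw [hxy] at h1
      omega
  have hc2 : T.card ≤ 2 * h / q + 1 := by
    rw [Int.card_Icc] at hc
    have : ((2 * (h : ℤ)) / q + 1 - 0).toNat = 2 * h / q + 1 := by
      have : (2 * (h : ℤ)) / q + 1 - 0 = ((2 * h / q + 1 : ℕ) : ℤ) := by push_cast; ring
      rw [this]; exact Int.toNat_natCast _
    omega
  have hq0 : (0 : ℝ) < q := by exact_mod_cast hq
  have h4 : ((2 * h / q : ℕ) : ℝ) ≤ 2 * h / q := by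
    have := @Nat.cast_div_le ℝ _ _ _ (2 * h) q
    push_cast at this ⊢
    exact this
  have h5 : (1 : ℝ) ≤ h / q := by
    rw [le_div_iff₀ hq0]; simpa using (by exact_mod_cast hqh : (q : ℝ) ≤ h)
  calc (T.card : ℝ) ≤ ((2 * h / q : ℕ) : ℝ) + 1 := by exact_mod_cast hc2
    _ ≤ 2 * h / q + h / q := by linarith
    _ = _ := by ring

lemma dvd_aux (s e : ℕ) (x : ℤ) (hs : 1 ≤ s) (hd : (s : ℤ) ∣ e * x) :
    ((s / Nat.gcd s e : ℕ) : ℤ) ∣ x := by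
  have h1 : s ∣ e * x.natAbs := by
    have := Int.natAbs_dvd_natAbs.mpr hd
    simpa [Int.natAbs_mul] using this
  rw [Int.natCast_dvd]
  have hg : 0 < Nat.gcd s e := Nat.gcd_pos_of_pos_left _ hs
  have hco := Nat.coprime_div_gcd_div_gcd hg
  refine hco.dvd_of_dvd_mul_left ?_
  have h2 : s / Nat.gcd s e * Nat.gcd s e = s := Nat.div_mul_cancel (Nat.gcd_dvd_left _ _)
  have h3 : e / Nat.gcd s e * Nat.gcd s e = e := Nat.div_mul_cancel (Nat.gcd_dvd_right _ _)
  refine Nat.dvd_of_mul_dvd_mul_right hg ?_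
  rw [h2, mul_right_comm, h3]
  exact h1

lemma int_aux {k : ℕ} (c y : Fin k → ℤ) (s : Fin k → ℕ) (hs : ∀ j, 1 ≤ s j) :
    ∃ z : ℤ, ((∏ j, s j : ℕ) : ℚ) * ∑ j, (c j : ℚ) * (y j / s j) = z := by
  refine ⟨∑ j, c j * y j * ((∏ i, s i) / s j : ℕ), ?_⟩
  rw [Finset.mul_sum]
  simp only [Int.cast_sum, Int.cast_mul, Int.cast_natCast]
  refine Finset.sum_congr rfl fun j _ => ?_
  have h0 : (s j : ℚ) ≠ 0 := by have := hs j; positivity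
  rw [Nat.cast_div (Finset.dvd_prod_of_mem s (Finset.mem_univ j)) h0]
  field_simp

lemma count_step (k h : ℕ) (c : Fin (k + 1) → ℤ) (s : Fin (k + 1) → ℕ)
    (hs : ∀ j, 1 ≤ s j ∧ s j ≤ h) (B : ℝ)
    (hB : ∀ δ : ℚ, (((Fintype.piFinset (fun _ : Fin k => Finset.Icc (-(h:ℤ)) h)).filter
      (fun r => ∑ j, (c j.succ : ℚ) * (r j / s j.succ) = δ)).card : ℝ) ≤ B) (δ : ℚ) :
    (((Fintype.piFinset (fun _ : Fin (k + 1) => Finset.Icc (-(h:ℤ)) h)).filter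
      (fun r => ∑ j, (c j : ℚ) * (r j / s j) = δ)).card : ℝ) ≤
      3 * h * ((Nat.gcd (s 0) ((c 0).natAbs * ∏ j : Fin k, s j.succ) : ℝ) / s 0) * B := by
  set S := (Fintype.piFinset (fun _ : Fin (k + 1) => Finset.Icc (-(h:ℤ)) h)).filter
      (fun r => ∑ j, (c j : ℚ) * (r j / s j) = δ) with hS
  set D := ∏ j : Fin k, s j.succ with hD
  set g := Nat.gcd (s 0) ((c 0).natAbs * D) with hg
  have hB0 : 0 ≤ B := le_trans (by positivity) (hB 0)
  have hg0 : 0 < g := Nat.gcd_pos_of_pos_left _ (hs 0).1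
  have hgs : g ∣ s 0 := Nat.gcd_dvd_left _ _
  have hgle : g ≤ s 0 := Nat.le_of_dvd (hs 0).1 hgs
  have hT : ((S.image (fun r => r 0)).card : ℝ) ≤ 3 * h / ((s 0 / g : ℕ) : ℝ) := by
    refine card_class h (s 0 / g) ?_ ?_ _ ?_ ?_
    · exact Nat.div_pos hgle hg0
    · exact (Nat.div_le_self _ _).trans (hs 0).2
    · intro x hx
      obtain ⟨r, hr, rfl⟩ := Finset.mem_image.mp hx
      exact Fintype.mem_piFinset.mp (Finset.mem_filter.mp hr).1 0
    · intro x hx y hy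
      obtain ⟨r, hr, rfl⟩ := Finset.mem_image.mp hx
      obtain ⟨t, ht, rfl⟩ := Finset.mem_image.mp hy
      have hr2 := (Finset.mem_filter.mp hr).2
      have ht2 := (Finset.mem_filter.mp ht).2
      rw [Fin.sum_univ_succ] at hr2 ht2
      refine dvd_aux _ _ _ (hs 0).1 ?_
      obtain ⟨z, hz⟩ := int_aux (fun j => c j.succ) (fun j => t j.succ - r j.succ)
        (fun j => s j.succ) (fun j => (hs _).1)
      have hz' : (D : ℚ) * ((c 0 : ℚ) * (r 0 - t 0)) = s 0 * z := by
        rw [← hz]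
        have e : ∑ j : Fin k, (c j.succ : ℚ) * (((t j.succ - r j.succ : ℤ) : ℚ) / s j.succ) =
          ∑ j : Fin k, (c j.succ : ℚ) * (t j.succ / s j.succ) -
          ∑ j : Fin k, (c j.succ : ℚ) * (r j.succ / s j.succ) := by
          rw [← Finset.sum_sub_distrib]
          refine Finset.sum_congr rfl fun j _ => ?_
          push_cast; ring
        rw [e]
        have h0 : (s 0 : ℚ) ≠ 0 := by have := (hs 0).1; positivity
        have : ∑ j : Fin k, (c j.succ : ℚ) * (t j.succ / s j.succ) -
          ∑ j : Fin k, (c j.succ : ℚ) * (r j.succ / s j.succ) = (c 0 : ℚ) * (r 0 - t 0) / s 0 := by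
          have e1 := hr2.trans ht2.symm
          have : (c 0 : ℚ) * (r 0 - t 0) / s 0 = (c 0 : ℚ) * (r 0 / s 0) - c 0 * (t 0 / s 0) := by ring
          rw [this]; linarith
        rw [this]
        rw [← hD]
        field_simp
      have hz2 : (D : ℤ) * (c 0 * (r 0 - t 0)) = s 0 * z := by exact_mod_cast hz'
      have hdv : (s 0 : ℤ) ∣ c 0 * ((D : ℤ) * (r 0 - t 0)) := ⟨z, by rw [← hz2]; ring⟩
      have hdv2 : (s 0 : ℤ) ∣ ((c 0).natAbs : ℤ) * ((D : ℤ) * (r 0 - t 0)) := by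
        rcases Int.natAbs_eq (c 0) with h | h
        · rw [← h]; exact hdv
        · rw [h] at hdv
          rw [neg_mul, dvd_neg] at hdv
          exact hdv
      push_cast
      rw [mul_assoc]
      simpa using hdv2
  have hq : ((s 0 / g : ℕ) : ℝ) = s 0 / g := by
    rw [Nat.cast_div hgs (by positivity)]
  have hcard : (S.card : ℝ) ≤ (S.image (fun r => r 0)).card * B := by
    rw [Finset.card_eq_sum_card_image (fun r => r 0) S]
    push_cast
    rw [← nsmul_eq_mul]
    refine Finset.sum_le_card_nsmul _ _ _ ?_
    intro a ha
    refine le_trans ?_ (hB (δ - c 0 * (a / s 0)))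
    refine Nat.cast_le.mpr ?_
    refine Finset.card_le_card_of_injOn (fun r j => r j.succ) ?_ ?_
    · intro r hr
      have hr := Finset.mem_filter.mp hr
      have hr1 := Finset.mem_filter.mp hr.1
      have hr2 := hr1.2
      rw [Fin.sum_univ_succ] at hr2
      rw [Finset.mem_coe, Finset.mem_filter]
      refine ⟨Fintype.mem_piFinset.mpr fun j => Fintype.mem_piFinset.mp hr1.1 _, ?_⟩
      rw [← hr.2, ← hr2]
      simp
    · intro r hr t ht hrt
      have hr := Finset.mem_filter.mp hr
      have ht := Finset.mem_filter.mp ht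
      funext j
      refine Fin.cases ?_ (fun i => ?_) j
      · exact hr.2.trans ht.2.symm
      · exact congrFun hrt i
  refine hcard.trans ?_
  refine mul_le_mul_of_nonneg_right (hT.trans (le_of_eq ?_)) hB0
  rw [hq]
  have : (s 0 : ℝ) ≠ 0 := by have := (hs 0).1; positivity
  have : (g : ℝ) ≠ 0 := by positivity
  field_simp

lemma inner_bound (A : ℕ) (ε : ℝ) (hε : 0 < ε) : ∃ C : ℝ, 1 ≤ C ∧ ∀ h : ℕ, 2 ≤ h → ∀ c : ℤ, ∀ m : ℕ,
    (m = 0 ↔ c = 0) → m ≤ h ^ A →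
    ∑ s ∈ Finset.Icc 1 h, 3 * (h : ℝ) * ((Nat.gcd s m : ℝ) / s) ≤
      C * (h : ℝ) ^ ((2 : ℝ) - (if c ≠ 0 then 1 else 0) + ε) := by
  obtain ⟨C, hC1, hC⟩ := divisor_bound (ε / (2 * (A + 1))) (by positivity)
  refine ⟨3 * C * (1 + 2 / ε), ?_, ?_⟩
  · have : 0 < 2 / ε := by positivity
    nlinarith
  intro h hh c m hmc hm
  have h1 : (1 : ℝ) ≤ h := by exact_mod_cast (by omega : 1 ≤ h)
  have h0 : (0 : ℝ) < h := by linarith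
  have hCe : 1 ≤ C * (1 + 2 / ε) := by
    have : 0 < 2 / ε := by positivity
    nlinarith
  rw [← Finset.mul_sum]
  by_cases hc : c = 0
  · have hm0 := hmc.mpr hc
    subst hm0
    have : ∑ s ∈ Finset.Icc 1 h, ((Nat.gcd s 0 : ℝ) / s) = h := by
      rw [Finset.sum_congr rfl (g := fun _ => (1 : ℝ))]
      · simp
      · intro s hs
        have : (s : ℝ) ≠ 0 := by
          have := (Finset.mem_Icc.mp hs).1
          positivity
        simp [this]
    rw [this]
    simp only [hc, ne_eq, not_true_eq_false, if_false, sub_zero]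
    rw [Real.rpow_add h0]
    have : (1 : ℝ) ≤ (h : ℝ) ^ ε := Real.one_le_rpow h1 hε.le
    have h2 : (h : ℝ) ^ (2 : ℝ) = h * h := by
      rw [Real.rpow_two]; ring
    rw [h2]
    calc 3 * (h : ℝ) * h = 3 * 1 * (h * h * 1) := by ring
      _ ≤ 3 * (C * (1 + 2 / ε)) * (h * h * (h : ℝ) ^ ε) := by gcongr
      _ = _ := by ring
  · have hm0 : m ≠ 0 := fun e => hc (hmc.mp e)
    have g1 := gcd_sum h m hm0
    have g2 := hC m hm0
    have g3 : (m : ℝ) ^ (ε / (2 * (A + 1))) ≤ (h : ℝ) ^ (ε / 2) := by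
      calc (m : ℝ) ^ (ε / (2 * (A + 1))) ≤ ((h : ℝ) ^ A) ^ (ε / (2 * (A + 1))) := by
            gcongr
            exact_mod_cast hm
        _ = (h : ℝ) ^ (A * (ε / (2 * (A + 1)))) := by
            rw [← Real.rpow_natCast, ← Real.rpow_mul h0.le]
        _ ≤ _ := by
            apply Real.rpow_le_rpow_of_exponent_le h1
            rw [← mul_div_assoc, div_le_div_iff₀ (by positivity) (by positivity)]
            nlinarith
    have g4 : 1 + Real.log h ≤ (1 + 2 / ε) * (h : ℝ) ^ (ε / 2) := by
      have a := Real.log_le_rpow_div h0.le (by positivity : 0 < ε / 2)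
      have b : (1 : ℝ) ≤ (h : ℝ) ^ (ε / 2) := Real.one_le_rpow h1 (by positivity)
      have e : (h : ℝ) ^ (ε / 2) / (ε / 2) = 2 / ε * (h : ℝ) ^ (ε / 2) := by
        field_simp
      rw [e] at a
      linarith
    have hl : 0 ≤ Real.log h := Real.log_nonneg h1
    simp only [ne_eq, hc, not_false_eq_true, if_true]
    have e : (h : ℝ) ^ ((2 : ℝ) - 1 + ε) = h * ((h : ℝ) ^ (ε / 2) * (h : ℝ) ^ (ε / 2)) := by
      rw [← Real.rpow_add h0, ← Real.rpow_one_add' h0.le (by positivity)]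
      congr 1; ring
    rw [e]
    calc 3 * (h : ℝ) * ∑ s ∈ Finset.Icc 1 h, ((Nat.gcd s m : ℝ) / s)
        ≤ 3 * (h : ℝ) * ((C * (h : ℝ) ^ (ε / 2)) * ((1 + 2 / ε) * (h : ℝ) ^ (ε / 2))) := by
          gcongr
          refine g1.trans ?_
          refine mul_le_mul (g2.trans (by gcongr)) g4 (by positivity) (by positivity)
      _ = _ := by ring

lemma sum_cons (k h : ℕ) (F : (Fin (k + 1) → ℕ) → ℝ) :
    ∑ s ∈ Fintype.piFinset (fun _ : Fin (k + 1) => Finset.Icc 1 h), F s =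
    ∑ t ∈ Fintype.piFinset (fun _ : Fin k => Finset.Icc 1 h), ∑ a ∈ Finset.Icc 1 h,
      F (Fin.cons a t) := by
  rw [Finset.sum_comm, ← Finset.sum_product']
  refine Finset.sum_bij' (fun s _ => (s 0, Fin.tail s)) (fun p _ => Fin.cons p.1 p.2) ?_ ?_ ?_ ?_ ?_
  · intro s hs
    rw [Fintype.mem_piFinset] at hs
    rw [Finset.mem_product, Fintype.mem_piFinset]
    exact ⟨hs 0, fun j => hs _⟩
  · intro p hp
    rw [Finset.mem_product, Fintype.mem_piFinset] at hp
    rw [Fintype.mem_piFinset]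
    intro j
    refine Fin.cases ?_ (fun i => ?_) j
    · exact hp.1
    · exact hp.2 i
  · intro s _; simp
  · intro p _; simp
  · intro s _; simp

lemma lin_f (k A : ℕ) : ∀ ε : ℝ, 0 < ε → ∃ C : ℝ, 1 ≤ C ∧ ∀ h : ℕ, 2 ≤ h → ∀ c : Fin k → ℤ,
    (∀ j, (c j).natAbs ≤ h ^ A) → ∃ f : (Fin k → ℕ) → ℝ,
    (∀ s, 0 ≤ f s) ∧
    (∀ s, (∀ j, 1 ≤ s j ∧ s j ≤ h) → ∀ δ : ℚ,
      (((Fintype.piFinset (fun _ : Fin k => Finset.Icc (-(h:ℤ)) h)).filter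
      (fun r => ∑ j, (c j : ℚ) * (r j / s j) = δ)).card : ℝ) ≤ f s) ∧
    ∑ s ∈ Fintype.piFinset (fun _ : Fin k => Finset.Icc 1 h), f s ≤
      C * (h : ℝ) ^ ((2 * k : ℝ) - (∑ j, if c j ≠ 0 then (1 : ℝ) else 0) + ε) := by
  induction k with
  | zero =>
    intro ε hε
    refine ⟨1, le_rfl, ?_⟩
    intro h hh c hc
    refine ⟨fun _ => 1, fun _ => zero_le_one, ?_, ?_⟩
    · intro s hs δ
      have := Finset.card_le_univ ((Fintype.piFinset (fun _ : Fin 0 => Finset.Icc (-(h:ℤ)) h)).filter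
      (fun r => ∑ j, (c j : ℚ) * (r j / s j) = δ))
      have h2 : Fintype.card (Fin 0 → ℤ) = 1 := Fintype.card_unique
      exact Nat.cast_le_one.mpr (this.trans h2.le)
    · have h1 : (1 : ℝ) ≤ h := by exact_mod_cast (by omega : 1 ≤ h)
      simp
      exact Real.one_le_rpow h1 hε.le
  | succ k ih =>
    intro ε hε
    obtain ⟨C1, hC1, H1⟩ := ih (ε / 2) (by positivity)
    obtain ⟨C2, hC2, H2⟩ := inner_bound (A + k) (ε / 2) (by positivity)
    refine ⟨C1 * C2, by nlinarith, ?_⟩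
    intro h hh c hc
    have h1 : (1 : ℝ) ≤ h := by exact_mod_cast (by omega : 1 ≤ h)
    have h0 : (0 : ℝ) < h := by linarith
    obtain ⟨f, hf0, hf1, hf2⟩ := H1 h hh (fun j => c j.succ) (fun j => hc _)
    refine ⟨fun s => 3 * h * ((Nat.gcd (s 0) ((c 0).natAbs * ∏ j : Fin k, s j.succ) : ℝ) / s 0) *
      f (fun j => s j.succ), ?_, ?_, ?_⟩
    · intro s
      have := hf0 (fun j => s j.succ)
      positivity
    · intro s hs δ
      exact count_step k h c s hs _ (hf1 _ (fun j => hs _)) δ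
    · rw [sum_cons]
      simp only [Fin.cons_zero, Fin.cons_succ]
      set e0 : ℝ := if c 0 ≠ 0 then 1 else 0 with he0
      calc _ ≤ ∑ t ∈ Fintype.piFinset (fun _ : Fin k => Finset.Icc 1 h),
            (C2 * (h : ℝ) ^ ((2 : ℝ) - e0 + ε / 2)) * f t := by
            refine Finset.sum_le_sum fun t ht => ?_
            rw [← Finset.sum_mul]
            refine mul_le_mul_of_nonneg_right ?_ (hf0 _)
            rw [Fintype.mem_piFinset] at ht
            refine H2 h hh (c 0) _ ?_ ?_
            · have : ∏ j, t j ≠ 0 := Finset.prod_ne_zero_iff.mpr fun j _ => by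
                have := (Finset.mem_Icc.mp (ht j)).1
                omega
              simp only [mul_eq_zero, this, or_false, Int.natAbs_eq_zero]
            · rw [pow_add]
              refine Nat.mul_le_mul (hc 0) ?_
              calc ∏ j, t j ≤ ∏ j : Fin k, h := Finset.prod_le_prod' fun j _ =>
                    (Finset.mem_Icc.mp (ht j)).2
                _ = h ^ k := by simp
        _ = (C2 * (h : ℝ) ^ ((2 : ℝ) - e0 + ε / 2)) *
            ∑ t ∈ Fintype.piFinset (fun _ : Fin k => Finset.Icc 1 h), f t := by
            rw [Finset.mul_sum]
        _ ≤ (C2 * (h : ℝ) ^ ((2 : ℝ) - e0 + ε / 2)) * _ :=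
            mul_le_mul_of_nonneg_left hf2 (by positivity)
        _ = _ := by
            rw [Fin.sum_univ_succ, ← he0, mul_mul_mul_comm, ← Real.rpow_add h0, mul_comm C2]
            congr 2
            push_cast
            ring

/-- Rationals of height at most `h`. -/
def FF (h : ℕ) : Set ℚ := {x : ℚ | x.num.natAbs ≤ h ∧ x.den ≤ h}

lemma FF_finite (h : ℕ) : (FF h).Finite := by
  have : FF h ⊆ (fun p : ℤ × ℕ => (p.1 : ℚ) / p.2) '' (Set.Icc (-(h : ℤ)) h ×ˢ Set.Icc 0 h) := by
    intro x hx
    refine ⟨(x.num, x.den), ⟨⟨?_, ?_⟩, by simp, hx.2⟩, Rat.num_div_den x⟩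
    · have := hx.1; simp only; omega
    · have := hx.1; simp only; omega
  exact (((Set.finite_Icc _ _).prod (Set.finite_Icc _ _)).image _).subset this

lemma lin_count (k A : ℕ) (ε : ℝ) (hε : 0 < ε) : ∃ C : ℝ, 1 ≤ C ∧ ∀ h : ℕ, 2 ≤ h → ∀ c : Fin k → ℤ,
    (∀ j, (c j).natAbs ≤ h ^ A) → ∀ δ : ℚ,
    (Set.ncard {x : Fin k → ℚ | (∀ j, x j ∈ FF h) ∧ ∑ j, (c j : ℚ) * x j = δ} : ℝ) ≤
      C * (h : ℝ) ^ ((2 * k : ℝ) - (∑ j, if c j ≠ 0 then (1 : ℝ) else 0) + ε) := by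
  obtain ⟨C, hC, H⟩ := lin_f k A ε hε
  refine ⟨C, hC, ?_⟩
  intro h hh c hc δ
  obtain ⟨f, hf0, hf1, hf2⟩ := H h hh c hc
  refine le_trans ?_ hf2
  set T := (Fintype.piFinset (fun _ : Fin k => Finset.Icc 1 h)).sigma (fun s =>
    (Fintype.piFinset (fun _ : Fin k => Finset.Icc (-(h:ℤ)) h)).filter
      (fun r => ∑ j, (c j : ℚ) * (r j / s j) = δ)) with hT
  have h1 : Set.ncard {x : Fin k → ℚ | (∀ j, x j ∈ FF h) ∧ ∑ j, (c j : ℚ) * x j = δ} ≤ T.card := by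
    rw [← Set.ncard_coe_finset]
    refine Set.ncard_le_ncard_of_injOn (fun x => ⟨fun j => (x j).den, fun j => (x j).num⟩) ?_ ?_
      (Finset.finite_toSet _)
    · intro x hx
      rw [Finset.mem_coe, hT, Finset.mem_sigma, Fintype.mem_piFinset, Finset.mem_filter,
        Fintype.mem_piFinset]
      refine ⟨fun j => Finset.mem_Icc.mpr ⟨(x j).pos, (hx.1 j).2⟩, fun j => Finset.mem_Icc.mpr ?_, ?_⟩
      · have := (hx.1 j).1
        simp only; omega
      · rw [← hx.2]
        simp only [Rat.num_div_den]
    · intro x _ y _ hxy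
      simp only [Sigma.mk.injEq, heq_eq_eq] at hxy
      funext j
      exact Rat.ext (congrFun hxy.2 j) (congrFun hxy.1 j)
  calc _ ≤ (T.card : ℝ) := by exact_mod_cast h1
    _ = ∑ s ∈ Fintype.piFinset (fun _ : Fin k => Finset.Icc 1 h), _ := by
        rw [hT, Finset.card_sigma]; push_cast; rfl
    _ ≤ _ := Finset.sum_le_sum fun s hs => hf1 s (fun j => by
        rw [Fintype.mem_piFinset] at hs
        exact Finset.mem_Icc.mp (hs j)) δ

open Matrix

/-- zero out the rows outside `P` -/
def resRows {n : ℕ} (P : Finset (Fin n)) (A : Fin n → Fin n → ℚ) : Fin n → Fin n → ℚ :=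
  fun i => if i ∈ P then A i else 0

/-- at most `b` choices for row `i` given the rows in `P` -/
def Opt {n : ℕ} (S : Set (Fin n → Fin n → ℚ)) (P : Finset (Fin n)) (i : Fin n) (b : ℝ) : Prop :=
  ∀ A0 ∈ S, (Set.ncard {x : Fin n → ℚ | ∃ A ∈ S, (∀ l ∈ P, A l = A0 l) ∧ A i = x} : ℝ) ≤ b

lemma res_step {n : ℕ} (S : Set (Fin n → Fin n → ℚ)) (hS : S.Finite) (P : Finset (Fin n)) (i : Fin n)
    (b : ℝ) (h : Opt S P i b) :
    (Set.ncard (resRows (insert i P) '' S) : ℝ) ≤ Set.ncard (resRows P '' S) * b := by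
  classical
  have hf1 : (resRows (insert i P) '' S).Finite := hS.image _
  have hf2 : (resRows P '' S).Finite := hS.image _
  have hres : ∀ A, resRows P (resRows (insert i P) A) = resRows P A := by
    intro A; funext l
    simp only [resRows]
    split_ifs with h1 h2
    · rfl
    · exact absurd (Finset.mem_insert_of_mem h1) h2
    · rfl
  rw [Set.ncard_eq_toFinset_card _ hf1, Set.ncard_eq_toFinset_card _ hf2]
  rw [Finset.card_eq_sum_card_fiberwise (f := resRows P) (t := hf2.toFinset)]
  · push_cast
    rw [← nsmul_eq_mul]
    refine Finset.sum_le_card_nsmul _ _ _ ?_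
    intro B hB
    obtain ⟨A0, hA0, rfl⟩ := hf2.mem_toFinset.mp hB
    refine le_trans ?_ (h A0 hA0)
    rw [Nat.cast_le, ← Set.ncard_coe_finset]
    refine Set.ncard_le_ncard_of_injOn (fun A => A i) ?_ ?_ ?_
    · intro A hA
      rw [Finset.mem_coe, Finset.mem_filter, hf1.mem_toFinset] at hA
      obtain ⟨⟨A', hA', rfl⟩, hA2⟩ := hA
      refine ⟨A', hA', ?_, ?_⟩
      · intro l hl
        rw [hres] at hA2
        have := congrFun hA2 l
        simpa [resRows, hl] using this
      · simp [resRows]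
    · intro A hA B hB hAB
      rw [Finset.mem_coe, Finset.mem_filter, hf1.mem_toFinset] at hA hB
      obtain ⟨⟨A', hA', rfl⟩, hA2⟩ := hA
      obtain ⟨⟨B', hB', rfl⟩, hB2⟩ := hB
      rw [hres] at hA2 hB2
      funext l
      by_cases hl : l = i
      · subst hl; exact hAB
      · have := congrFun (hA2.trans hB2.symm) l
        simpa [resRows, hl] using this
    · refine (hS.image (fun A => A i)).subset ?_
      rintro x ⟨A, hA, -, rfl⟩
      exact ⟨A, hA, rfl⟩
  · intro A hA
    rw [Finset.mem_coe, hf1.mem_toFinset] at hA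
    obtain ⟨A', hA', rfl⟩ := hA
    rw [Finset.mem_coe, hf2.mem_toFinset]
    exact ⟨A', hA', (hres A').symm⟩

lemma res_chain {n : ℕ} (S : Set (Fin n → Fin n → ℚ)) (hS : S.Finite) (P : Finset (Fin n))
    (b : ℝ) (hb : 0 ≤ b) (Q : Finset (Fin n)) (hPQ : Disjoint P Q)
    (h : ∀ P', P ⊆ P' → ∀ i ∈ Q, i ∉ P' → Opt S P' i b) :
    (Set.ncard (resRows (P ∪ Q) '' S) : ℝ) ≤ Set.ncard (resRows P '' S) * b ^ Q.card := by
  classical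
  induction Q using Finset.induction_on with
  | empty => simp
  | insert i Q hi ih =>
    rw [Finset.disjoint_insert_right] at hPQ
    have ih' := ih hPQ.2 (fun P' hP' l hl => h P' hP' l (Finset.mem_insert_of_mem hl))
    rw [Finset.union_insert, Finset.card_insert_of_notMem hi, pow_succ, ← mul_assoc]
    refine (res_step S hS _ i b (h _ Finset.subset_union_left i (Finset.mem_insert_self _ _) ?_)).trans
      (mul_le_mul_of_nonneg_right ih' hb)
    simp [hPQ.1, hi]

lemma chain_all {n : ℕ} (S : Set (Fin n → Fin n → ℚ)) (hS : S.Finite) (I : Finset (Fin n))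
    (i0 : Fin n) (hi0 : i0 ∉ I) (N b : ℝ) (hN : 0 ≤ N) (hb : 0 ≤ b)
    (h1 : ∀ P i, Opt S P i N)
    (h2 : ∀ P i, I ⊆ P → i ∉ P → (i = i0 → ∀ l, l ≠ i0 → l ∈ P) → Opt S P i b) :
    (S.ncard : ℝ) ≤ N ^ I.card * b ^ (n - I.card) := by
  classical
  have s1 := res_chain S hS ∅ N hN I (by simp) (fun P' _ i _ _ => h1 P' i)
  have e0 : (Set.ncard (resRows ∅ '' S) : ℝ) ≤ 1 := by
    rw [Nat.cast_le_one, Set.ncard_le_one (hS.image _)]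
    rintro _ ⟨A, _, rfl⟩ _ ⟨B, _, rfl⟩
    funext i; simp [resRows]
  have s2 := res_chain S hS I b hb ((Finset.univ \ I).erase i0)
    (by
      rw [Finset.disjoint_left]
      intro x hx hx'
      simp [hx] at hx')
    (fun P' hP' i hi hiP => h2 P' i hP' hiP (fun e => absurd e (Finset.ne_of_mem_erase hi)))
  have e2 : I ∪ (Finset.univ \ I).erase i0 = Finset.univ.erase i0 := by
    ext x
    simp only [Finset.mem_union, Finset.mem_erase, Finset.mem_sdiff, Finset.mem_univ, true_and, and_true]
    constructor
    · rintro (h | h)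
      · rintro rfl; exact hi0 h
      · exact h.1
    · intro h; by_cases hx : x ∈ I <;> simp [hx, h]
  rw [e2] at s2
  have s3 := res_step S hS (Finset.univ.erase i0) i0 b (h2 _ _ (by
      intro x hx
      rw [Finset.mem_erase]
      exact ⟨fun e => hi0 (e ▸ hx), Finset.mem_univ _⟩) (by simp) (by intro _ l hl; simp [hl]))
  have e3 : resRows (insert i0 (Finset.univ.erase i0)) '' S = S := by
    rw [Finset.insert_erase (Finset.mem_univ _)]
    have : resRows (Finset.univ : Finset (Fin n)) = id := by
      funext A i; simp [resRows]
    rw [this, Set.image_id]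
  rw [e3] at s3
  rw [Finset.empty_union] at s1
  have hcard : ((Finset.univ \ I).erase i0).card + 1 = n - I.card := by
    rw [Finset.card_erase_of_mem (by simp [hi0]), Finset.card_sdiff_of_subset (Finset.subset_univ _)]
    have : I.card < n := by
      have := Finset.card_lt_univ_of_notMem hi0
      simpa using this
    simp; omega
  rw [← hcard, pow_succ, ← mul_assoc]
  refine s3.trans (mul_le_mul_of_nonneg_right (s2.trans (mul_le_mul_of_nonneg_right (s1.trans ?_) (by positivity))) hb)
  calc _ ≤ 1 * N ^ I.card := mul_le_mul_of_nonneg_right e0 (by positivity)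
    _ = _ := one_mul _

def Cls (n h : ℕ) (δ : ℚ) (I : Finset (Fin n)) (i0 : Fin n) (J : Finset (Fin n)) :
    Set (Matrix (Fin n) (Fin n) ℚ) :=
  {A | (∀ i j, A i j ∈ FF h) ∧ A.det = δ ∧ ∃ v : Fin n → ℚ, (∀ j, v j ≠ 0 ↔ j ∈ J) ∧
    (∀ i, i ≠ i0 → (A *ᵥ v) i = 0) ∧ (δ = 0 → (A *ᵥ v) i0 = 0) ∧
    ∀ w : Fin n → ℚ, (∀ j, j ∉ J → w j = 0) → (∀ i ∈ I, (A *ᵥ w) i = 0) → ∃ c : ℚ, w = c • v}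

lemma rows_reduce {n : ℕ} (A : Matrix (Fin n) (Fin n) ℚ) (v : Fin n → ℚ) (hv : v ≠ 0)
    (J : Finset (Fin n)) (hJ : ∀ j, v j ≠ 0 ↔ j ∈ J) (R : Finset (Fin n))
    (hR : ∀ i ∈ R, (A *ᵥ v) i = 0) :
    ∃ I ⊆ R, I.card < J.card ∧ ∀ w : Fin n → ℚ, (∀ j, j ∉ J → w j = 0) →
      (∀ i ∈ I, (A *ᵥ w) i = 0) → ∀ i ∈ R, (A *ᵥ w) i = 0 := by
  classical
  let ρ : Fin n → (J → ℚ) := fun i j => A i j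
  let φ : (Fin n → ℚ) → ((J → ℚ) →ₗ[ℚ] ℚ) := fun w => ∑ j : J, w j • LinearMap.proj j
  have hφ : ∀ w : Fin n → ℚ, (∀ j, j ∉ J → w j = 0) → ∀ i, φ w (ρ i) = (A *ᵥ w) i := by
    intro w hw i
    simp only [φ, ρ, LinearMap.sum_apply, LinearMap.smul_apply, LinearMap.proj_apply, smul_eq_mul,
      Matrix.mulVec, dotProduct]
    rw [Finset.sum_coe_sort J (fun j => w j * A i j)]
    rw [← Finset.sum_subset (Finset.subset_univ J)]
    · exact Finset.sum_congr rfl fun _ _ => mul_comm _ _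
    · intro j _ hj; rw [hw j hj, mul_zero]
  obtain ⟨b, hbR, -, hspan, hli⟩ := exists_linearIndepOn_extension (K := ℚ) (v := ρ)
    (s := ∅) (t := (R : Set (Fin n))) (linearIndepOn_empty ℚ ρ) (Set.empty_subset _)
  have hbfin : b.Finite := (Finset.finite_toSet R).subset hbR
  have key : ∀ w : Fin n → ℚ, (∀ j, j ∉ J → w j = 0) →
      (∀ i ∈ b, (A *ᵥ w) i = 0) → ∀ x ∈ Submodule.span ℚ (ρ '' b), φ w x = 0 := by
    intro w hw hwb
    have : Submodule.span ℚ (ρ '' b) ≤ LinearMap.ker (φ w) := by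
      rw [Submodule.span_le]
      rintro _ ⟨i, hi, rfl⟩
      simp only [SetLike.mem_coe, LinearMap.mem_ker]
      rw [hφ w hw, hwb i hi]
    intro x hx
    exact this hx
  have hvJ : ∀ j, j ∉ J → v j = 0 := fun j hj => by
    by_contra h; exact hj ((hJ j).mp h)
  refine ⟨hbfin.toFinset, ?_, ?_, ?_⟩
  · intro i hi
    exact hbR (hbfin.mem_toFinset.mp hi)
  · have : Fintype b := hbfin.fintype
    have hli' : LinearIndependent ℚ (fun i : b => ρ i) := hli
    have hle : Fintype.card b ≤ J.card := by
      have := hli'.fintype_card_le_finrank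
      simpa using this
    have hcb : hbfin.toFinset.card = Fintype.card b := by
      rw [← Set.toFinset_card]; congr 1; ext; simp
    rw [hcb]
    refine lt_of_le_of_ne hle fun he => ?_
    have htop := hli'.span_eq_top_of_card_eq_finrank' (by simpa using he)
    have hr : Set.range (fun i : b => ρ i) = ρ '' b := by
      ext; simp
    rw [hr] at htop
    have hk := key v hvJ (fun i hi => hR i (hbR hi))
    rw [htop] at hk
    apply hv
    funext j
    by_cases hj : j ∈ J
    · have := hk (Pi.single ⟨j, hj⟩ 1) trivial
      simp only [φ, LinearMap.sum_apply, LinearMap.smul_apply, LinearMap.proj_apply, smul_eq_mul] at this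
      rw [Finset.sum_eq_single ⟨j, hj⟩] at this
      · simpa using this
      · intro k _ hk; simp [hk]
      · simp
    · exact hvJ j hj
  · intro w hw hwI i hi
    rw [← hφ w hw]
    refine key w hw (fun i hi => hwI i (hbfin.mem_toFinset.mpr hi)) _ ?_
    exact hspan ⟨i, hi, rfl⟩

lemma cover (n h : ℕ) (hn : 0 < n) (δ : ℚ) (A : Matrix (Fin n) (Fin n) ℚ) (hA : ∀ i j, A i j ∈ FF h)
    (hd : A.det = δ) : ∃ I : Finset (Fin n), ∃ i0 : Fin n, ∃ J : Finset (Fin n),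
      i0 ∉ I ∧ I.card < J.card ∧ A ∈ Cls n h δ I i0 J := by
  classical
  by_cases h0 : δ = 0
  · have hex : ∃ k : ℕ, ∃ v : Fin n → ℚ, v ≠ 0 ∧ A *ᵥ v = 0 ∧ (Finset.univ.filter (fun j => v j ≠ 0)).card = k := by
      obtain ⟨v, hv, hv2⟩ := Matrix.exists_mulVec_eq_zero_iff.mpr (hd.trans h0)
      exact ⟨_, v, hv, hv2, rfl⟩
    obtain ⟨v, hv, hAv, hk⟩ := Nat.find_spec hex
    have hmin := fun m hm => Nat.find_min hex (m := m) hm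
    rw [← hk] at hmin
    set J := Finset.univ.filter (fun j => v j ≠ 0) with hJ
    have hJ' : ∀ j, v j ≠ 0 ↔ j ∈ J := by intro j; simp [hJ]
    obtain ⟨I, -, hIJ, hI⟩ := rows_reduce A v hv J hJ' Finset.univ (fun i _ => by rw [hAv]; rfl)
    have hIn : ∃ i0, i0 ∉ I := by
      by_contra hc
      push Not at hc
      have h1 : I = Finset.univ := Finset.eq_univ_of_forall hc
      have h2 := Finset.card_le_univ J
      rw [h1, Finset.card_univ] at hIJ
      omega
    obtain ⟨i0, hi0⟩ := hIn
    refine ⟨I, i0, J, hi0, hIJ, hA, hd, v, hJ', fun i _ => by rw [hAv]; rfl, fun _ => by rw [hAv]; rfl, ?_⟩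
    intro w hw hwI
    have hAw : A *ᵥ w = 0 := funext fun i => hI w hw hwI i (Finset.mem_univ _)
    obtain ⟨j, hj⟩ := Function.ne_iff.mp hv
    refine ⟨w j / v j, ?_⟩
    by_contra hne
    refine hmin _ ?_ ⟨w - (w j / v j) • v, sub_ne_zero.mpr hne, ?_, rfl⟩
    · refine Finset.card_lt_card ?_
      rw [Finset.ssubset_iff_of_subset]
      · refine ⟨j, (hJ' j).mp hj, ?_⟩
        have : v j ≠ 0 := hj
        simp [this]
      · intro l hl
        rw [Finset.mem_filter] at hl
        by_contra hlJ
        have h1 := hw l hlJ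
        have h2 : v l = 0 := by by_contra h; exact hlJ ((hJ' l).mp h)
        apply hl.2
        simp [h1, h2]
    · rw [Matrix.mulVec_sub, Matrix.mulVec_smul, hAw, hAv]; simp
  · let i0 : Fin n := ⟨0, hn⟩
    set v := A.cramer (Pi.single i0 1) with hvdef
    have hAv : A *ᵥ v = δ • Pi.single i0 1 := by rw [hvdef, Matrix.mulVec_cramer, hd]
    have hv : v ≠ 0 := by
      intro hv
      rw [hv, Matrix.mulVec_zero] at hAv
      have := congrFun hAv i0
      simp at this
      exact h0 this.symm
    set J := Finset.univ.filter (fun j => v j ≠ 0) with hJ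
    have hJ' : ∀ j, v j ≠ 0 ↔ j ∈ J := by intro j; simp [hJ]
    have hz : ∀ i, i ≠ i0 → (A *ᵥ v) i = 0 := by
      intro i hi; rw [hAv]; simp [hi]
    obtain ⟨I, hIR, hIJ, hI⟩ := rows_reduce A v hv J hJ' (Finset.univ.erase i0)
      (fun i hi => hz i (Finset.ne_of_mem_erase hi))
    refine ⟨I, i0, J, fun h => by simpa using hIR h, hIJ, hA, hd, v, hJ', hz, fun h => absurd h h0, ?_⟩
    intro w hw hwI
    have hAw := hI w hw hwI
    refine ⟨(A *ᵥ w) i0 / δ, ?_⟩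
    rw [← sub_eq_zero]
    refine Matrix.eq_zero_of_mulVec_eq_zero (M := A) (by rw [hd]; exact h0) ?_
    rw [Matrix.mulVec_sub, Matrix.mulVec_smul, hAv]
    funext i
    by_cases hi : i = i0
    · subst hi; simp [h0]
    · have := hAw i (by simp [hi])
      simp [this, hi]

lemma opt_sub (n h : ℕ) (δ : ℚ) (I : Finset (Fin n)) (i0 : Fin n) (J : Finset (Fin n))
    (P : Finset (Fin n)) (hIP : I ⊆ P) (i : Fin n) (hi : i = i0 → ∀ l, l ≠ i0 → l ∈ P)
    (A0 A : Matrix (Fin n) (Fin n) ℚ) (hA : A ∈ Cls n h δ I i0 J) (hA0 : A0 ∈ Cls n h δ I i0 J)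
    (hP : ∀ l ∈ P, A l = A0 l) (u : Fin n → ℚ) (hu : ∀ j, j ∉ J → u j = 0)
    (hu0 : ∀ i ∈ I, (A0 *ᵥ u) i = 0) : (A *ᵥ u) i = (A0 *ᵥ u) i := by
  obtain ⟨-, hd0, v0, hv0, hz0, hdz0, huniq0⟩ := hA0
  obtain ⟨-, hd, v, hv, hz, hdz, huniq⟩ := hA
  have hrow : ∀ l ∈ P, ∀ w, (A *ᵥ w) l = (A0 *ᵥ w) l := by
    intro l hl w
    simp only [Matrix.mulVec, hP l hl]
  obtain ⟨c0, hc0⟩ := huniq0 u hu hu0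
  obtain ⟨c, hc⟩ := huniq u hu (fun i hi => by rw [hrow i (hIP hi)]; exact hu0 i hi)
  have ha : ∀ i, i ≠ i0 → (A *ᵥ u) i = 0 := by
    intro i hi; rw [hc, Matrix.mulVec_smul, Pi.smul_apply, hz i hi, smul_zero]
  have ha0 : ∀ i, i ≠ i0 → (A0 *ᵥ u) i = 0 := by
    intro i hi; rw [hc0, Matrix.mulVec_smul, Pi.smul_apply, hz0 i hi, smul_zero]
  by_cases hii : i = i0
  · subst hii
    by_cases h0 : δ = 0
    · rw [hc, Matrix.mulVec_smul, Pi.smul_apply, hdz h0, ← hc, hc0, Matrix.mulVec_smul, Pi.smul_apply, hdz0 h0]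
      simp
    · by_cases hu00 : u = 0
      · simp [hu00]
      obtain ⟨j, hj⟩ := Function.ne_iff.mp hu00
      have hadj : A.adjugate j i = A0.adjugate j i := by
        rw [Matrix.adjugate_apply, Matrix.adjugate_apply]
        congr 1
        ext l m
        by_cases hl : l = i
        · subst hl; simp
        · rw [Matrix.updateRow_ne hl, Matrix.updateRow_ne hl, hP l (hi rfl l hl)]
      have gen : ∀ B : Matrix (Fin n) (Fin n) ℚ, B.det = δ → (∀ l, l ≠ i → (B *ᵥ u) l = 0) →
          B.adjugate j i * (B *ᵥ u) i = δ * u j := by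
        intro B hB hBz
        have h1 : B.adjugate *ᵥ (B *ᵥ u) = δ • u := by
          rw [Matrix.mulVec_mulVec, Matrix.adjugate_mul, hB, Matrix.smul_mulVec, Matrix.one_mulVec]
        have h2 := congrFun h1 j
        rw [Matrix.mulVec, dotProduct, Finset.sum_eq_single i] at h2
        · simpa using h2
        · intro l _ hl; rw [hBz l hl, mul_zero]
        · simp
      have g1 := gen A hd ha
      have g0 := gen A0 hd0 ha0
      rw [hadj, ← g0] at g1
      refine mul_left_cancel₀ ?_ g1
      intro hz
      rw [hz, zero_mul] at g0
      exact mul_ne_zero h0 hj g0.symm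
  · rw [ha i hii, ha0 i hii]


attribute [local instance] Matrix.seminormedAddCommGroup

lemma siegel_aux (n h : ℕ) (hh : 2 ≤ h) (A0 : Matrix (Fin n) (Fin n) ℚ) (hA : ∀ i j, A0 i j ∈ FF h)
    (I J : Finset (Fin n)) (hIJ : I.card < J.card) :
    ∃ w : Fin n → ℤ, w ≠ 0 ∧ (∀ j, j ∉ J → w j = 0) ∧
      (∀ i ∈ I, (A0 *ᵥ (fun j => (w j : ℚ))) i = 0) ∧ ∀ j, (w j).natAbs ≤ h ^ ((2 * n + 1) * n) := by
  classical
  have h1 : (1 : ℝ) ≤ h := by exact_mod_cast (by omega : 1 ≤ h)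
  rcases Nat.eq_zero_or_pos I.card with hI0 | hI0
  · obtain ⟨j, hj⟩ := Finset.card_pos.mp (hI0 ▸ hIJ)
    refine ⟨Pi.single j 1, by simp, ?_, ?_, ?_⟩
    · intro l hl
      have : l ≠ j := fun e => hl (e ▸ hj)
      simp [this]
    · intro i hi
      rw [Finset.card_eq_zero] at hI0
      simp [hI0] at hi
    · intro l
      have : 1 ≤ h ^ ((2 * n + 1) * n) := Nat.one_le_pow _ _ (by omega)
      by_cases hl : l = j
      · subst hl; simpa using this
      · simp [hl]
  · let B : Matrix I J ℤ := fun i j => (A0 i j).num * (((∏ l, (A0 i l).den) / (A0 i j).den : ℕ) : ℤ)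
    have hB : ∀ (i : I) (j : J), (B i j : ℚ) = ((∏ l, (A0 i l).den : ℕ) : ℚ) * A0 i j := by
      intro i j
      simp only [B, Int.cast_mul, Int.cast_natCast]
      have h0 : ((A0 i j).den : ℚ) ≠ 0 := by have := (A0 i j).pos; positivity
      rw [Nat.cast_div (Finset.dvd_prod_of_mem (fun l => (A0 i l).den) (Finset.mem_univ _)) h0]
      conv_rhs => rw [← Rat.num_div_den (A0 i j)]
      field_simp
    have hBn : ‖B‖ ≤ (h : ℝ) ^ (n + 1) := by
      rw [Matrix.norm_le_iff (by positivity)]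
      intro i j
      rw [Int.norm_eq_abs]
      have : (B i j).natAbs ≤ h ^ (n + 1) := by
        simp only [B, Int.natAbs_mul, Int.natAbs_natCast]
        rw [pow_succ, mul_comm]
        refine Nat.mul_le_mul ?_ (hA i j).1
        refine (Nat.div_le_self _ _).trans ?_
        calc ∏ l, (A0 i l).den ≤ ∏ l : Fin n, h := Finset.prod_le_prod' fun l _ => (hA i l).2
          _ = h ^ n := by simp
      have h2 : ((B i j).natAbs : ℝ) = |(B i j : ℝ)| := by
        rw [Nat.cast_natAbs]; push_cast; rfl
      rw [← h2]; exact_mod_cast this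
    obtain ⟨t, ht0, hBt, htn⟩ := Int.Matrix.exists_ne_zero_int_vec_norm_le B (by simpa using hIJ)
      (by simpa using hI0)
    have hbase : (Fintype.card J : ℝ) * max 1 ‖B‖ ≤ (h : ℝ) ^ (2 * n + 1) := by
      have a1 : (Fintype.card J : ℝ) ≤ (h : ℝ) ^ n := by
        have : J.card ≤ n := by simpa using Finset.card_le_univ J
        have h3 : n ≤ h ^ n := (Nat.lt_pow_self (by omega)).le
        rw [Fintype.card_coe]
        exact_mod_cast this.trans h3
      have a2 : max 1 ‖B‖ ≤ (h : ℝ) ^ (n + 1) := max_le (one_le_pow₀ h1) hBn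
      calc _ ≤ (h : ℝ) ^ n * (h : ℝ) ^ (n + 1) := by gcongr
        _ = _ := by rw [← pow_add]; congr 1; ring
    have htn' : ‖t‖ ≤ (h : ℝ) ^ ((2 * n + 1) * n) := by
      refine htn.trans ?_
      rw [Fintype.card_coe, Fintype.card_coe] at *
      have d1 : (1 : ℝ) ≤ (J.card : ℝ) - I.card := by
        have : (I.card : ℝ) + 1 ≤ J.card := by exact_mod_cast hIJ
        linarith
      have d2 : (I.card : ℝ) / (J.card - I.card) ≤ n := by
        rw [div_le_iff₀ (by linarith)]
        have : (I.card : ℝ) ≤ n := by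
          exact_mod_cast (by simpa using Finset.card_le_univ I : I.card ≤ n)
        nlinarith
      calc _ ≤ ((h : ℝ) ^ (2 * n + 1)) ^ ((I.card : ℝ) / (J.card - I.card)) := by
            refine Real.rpow_le_rpow (by positivity) hbase ?_
            exact div_nonneg (by positivity) (by linarith)
        _ ≤ ((h : ℝ) ^ (2 * n + 1)) ^ (n : ℝ) :=
            Real.rpow_le_rpow_of_exponent_le (one_le_pow₀ h1) d2
        _ = _ := by rw [Real.rpow_natCast, ← pow_mul]
    refine ⟨fun j => if hj : j ∈ J then t ⟨j, hj⟩ else 0, ?_, ?_, ?_, ?_⟩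
    · intro he
      apply ht0
      funext j
      have := congrFun he j
      simpa using this
    · intro j hj; simp [hj]
    · intro i hi
      have e1 := congrFun hBt ⟨i, hi⟩
      have e2 : ∑ j : J, (B ⟨i, hi⟩ j : ℚ) * (t j : ℚ) = 0 := by
        have : ∑ j : J, B ⟨i, hi⟩ j * t j = 0 := e1
        exact_mod_cast this
      simp only [hB, mul_assoc] at e2
      rw [← Finset.mul_sum, mul_eq_zero] at e2
      have hD : ((∏ l, (A0 i l).den : ℕ) : ℚ) ≠ 0 := by
        rw [Nat.cast_ne_zero]
        exact Finset.prod_ne_zero_iff.mpr fun l _ => (A0 i l).den_nz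
      have e3 := e2.resolve_left hD
      simp only [Matrix.mulVec, dotProduct]
      rw [← Finset.sum_subset (Finset.subset_univ J)]
      · rw [← Finset.sum_coe_sort J, ← e3]
        refine Finset.sum_congr rfl fun j _ => ?_
        simp
      · intro j _ hj; simp [hj]
    · intro j
      by_cases hj : j ∈ J
      · simp only [hj, dif_pos]
        have h3 := (norm_le_pi_norm t ⟨j, hj⟩).trans htn'
        rw [Int.norm_eq_abs] at h3
        have h2 : ((t ⟨j, hj⟩).natAbs : ℝ) = |(t ⟨j, hj⟩ : ℝ)| := by
          rw [Nat.cast_natAbs]; push_cast; rfl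
        rw [← h2] at h3
        exact_mod_cast h3
      · simp [hj]

lemma cls_bound (n : ℕ) (ε : ℝ) (hε : 0 < ε) : ∃ C : ℝ, 0 ≤ C ∧ ∀ h : ℕ, 2 ≤ h → ∀ δ : ℚ,
    ∀ I : Finset (Fin n), ∀ i0 : Fin n, ∀ J : Finset (Fin n), i0 ∉ I → I.card < J.card →
    ((Cls n h δ I i0 J).ncard : ℝ) ≤ C * (h : ℝ) ^ ((2 * n ^ 2 : ℝ) - n + n * ε) := by
  classical
  obtain ⟨C, hC1, hC⟩ := lin_count n ((2 * n + 1) * n) ε hε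
  refine ⟨C ^ n, by positivity, ?_⟩
  intro h hh δ I i0 J hi0 hIJ
  have h1 : (1 : ℝ) ≤ h := by exact_mod_cast (by omega : 1 ≤ h)
  have h0 : (0 : ℝ) < h := by linarith
  have hfin1 : {x : Fin n → ℚ | ∀ j, x j ∈ FF h}.Finite := by
    have := Set.Finite.pi (fun _ : Fin n => FF_finite h)
    refine this.subset fun x hx => ?_
    simpa [Set.mem_pi] using hx
  have hfin : (Cls n h δ I i0 J).Finite := by
    have := Set.Finite.pi (fun _ : Fin n => hfin1)
    refine this.subset fun A hA => ?_
    rw [Set.mem_pi]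
    intro i _ j
    exact hA.1 i j
  have hIn : I.card ≤ n := by simpa using Finset.card_le_univ I
  have hJn : J.card ≤ n := by simpa using Finset.card_le_univ J
  have main := chain_all (Cls n h δ I i0 J) hfin I i0 hi0
    (C * (h : ℝ) ^ ((2 * n : ℝ) + ε)) (C * (h : ℝ) ^ ((2 * n : ℝ) - J.card + ε))
    (by positivity) (by positivity) ?_ ?_
  · refine main.trans ?_
    rw [mul_pow, mul_pow, mul_mul_mul_comm, ← pow_add, Nat.add_sub_cancel' hIn]
    refine mul_le_mul_of_nonneg_left ?_ (by positivity)
    rw [← Real.rpow_natCast, ← Real.rpow_natCast, ← Real.rpow_mul h0.le, ← Real.rpow_mul h0.le,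
      ← Real.rpow_add h0]
    refine Real.rpow_le_rpow_of_exponent_le h1 ?_
    rw [Nat.cast_sub hIn]
    have a : (I.card : ℝ) + 1 ≤ J.card := by exact_mod_cast hIJ
    have b : (J.card : ℝ) ≤ n := by exact_mod_cast hJn
    have c : (0 : ℝ) ≤ I.card := by positivity
    nlinarith [mul_nonneg (by linarith : (0 : ℝ) ≤ J.card - 1) (by linarith : (0 : ℝ) ≤ n - J.card),
      mul_nonneg (by linarith : (0 : ℝ) ≤ J.card - 1 - I.card) (by linarith : (0 : ℝ) ≤ J.card)]
  · intro P i A0 hA0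
    have hc := hC h hh (fun _ => 0) (by intro j; simp) 0
    simp only [ne_eq, not_true_eq_false, if_false, Finset.sum_const_zero, sub_zero] at hc
    refine le_trans (Nat.cast_le.mpr (Set.ncard_le_ncard ?_ ?_)) hc
    · rintro x ⟨A, hA, -, rfl⟩
      exact ⟨hA.1 i, by simp⟩
    · exact hfin1.subset fun x hx => hx.1
  · intro P i hIP hiP hi A0 hA0
    obtain ⟨w, hw0, hwJ, hwI, hwb⟩ := siegel_aux n h hh A0 hA0.1 I J hIJ
    have hc := hC h hh w hwb ((A0 *ᵥ (fun j => (w j : ℚ))) i)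
    have hsupp : ∀ j, w j ≠ 0 ↔ j ∈ J := by
      obtain ⟨-, -, v, hv, -, -, huniq⟩ := hA0
      obtain ⟨c, hc⟩ := huniq (fun j => (w j : ℚ)) (fun j hj => by simp [hwJ j hj]) hwI
      have hc0 : c ≠ 0 := by
        rintro rfl
        apply hw0
        funext j
        have := congrFun hc j
        simpa using this
      intro j
      rw [← hv j]
      have := congrFun hc j
      simp only [Pi.smul_apply, smul_eq_mul] at this
      rw [← Int.cast_ne_zero (α := ℚ), this]
      simp [hc0]
    have hsum : (∑ j, if w j ≠ 0 then (1 : ℝ) else 0) = J.card := by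
      simp only [hsupp]
      simp
    rw [hsum] at hc
    refine le_trans (Nat.cast_le.mpr (Set.ncard_le_ncard ?_ ?_)) hc
    · rintro x ⟨A, hA, hAP, rfl⟩
      refine ⟨hA.1 i, ?_⟩
      rw [← opt_sub n h δ I i0 J P hIP i hi A0 A hA hA0 hAP (fun j => (w j : ℚ))
        (fun j hj => by simp [hwJ j hj]) hwI]
      simp only [Matrix.mulVec, dotProduct]
      exact Finset.sum_congr rfl fun _ _ => mul_comm _ _
    · exact hfin1.subset fun x hx => hx.1


theorem stmt3 (n : ℕ) (hn : n ≥ 3) :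
    ∀ ε > (0 : ℝ), ∃ C : ℝ, ∀ H : ℝ, H ≥ 2 → ∀ δ : ℚ,
      (Set.ncard {A : Matrix (Fin n) (Fin n) ℚ |
          (∀ i j, A i j ∈ Farey H) ∧ A.det = δ} : ℝ) ≤
        C * H ^ ((2 * n ^ 2 : ℝ) - n + ε) := by
  classical
  intro ε hε
  have hn0 : (0 : ℝ) < n := by exact_mod_cast (by omega : 0 < n)
  obtain ⟨C, hC0, hC⟩ := cls_bound n (ε / n) (by positivity)
  let T : Finset (Finset (Fin n) × Fin n × Finset (Fin n)) :=
    Finset.univ.filter (fun p => p.2.1 ∉ p.1 ∧ p.1.card < p.2.2.card)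
  refine ⟨T.card * C, ?_⟩
  intro H hH δ
  set h := ⌊H⌋₊ with hh
  have hh2 : 2 ≤ h := Nat.le_floor (by exact_mod_cast hH)
  have hhH : (h : ℝ) ≤ H := Nat.floor_le (by linarith)
  have hF : ∀ x, x ∈ Farey H → x ∈ FF h := by
    intro x hx
    refine ⟨Nat.le_floor ?_, Nat.le_floor hx.2⟩
    rw [Nat.cast_natAbs]; push_cast; exact hx.1
  have hsub : {A : Matrix (Fin n) (Fin n) ℚ | (∀ i j, A i j ∈ Farey H) ∧ A.det = δ} ⊆
      ⋃ p ∈ T, Cls n h δ p.1 p.2.1 p.2.2 := by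
    rintro A ⟨hA, hd⟩
    obtain ⟨I, i0, J, h1, h2, h3⟩ := cover n h (by omega) δ A (fun i j => hF _ (hA i j)) hd
    simp only [Set.mem_iUnion]
    exact ⟨(I, i0, J), by simp [T, h1, h2], h3⟩
  have hfin : ∀ p : Finset (Fin n) × Fin n × Finset (Fin n), (Cls n h δ p.1 p.2.1 p.2.2).Finite := by
    intro p
    have := Set.Finite.pi (fun _ : Fin n => Set.Finite.pi (fun _ : Fin n => FF_finite h))
    refine this.subset fun A hA => ?_
    rw [Set.mem_pi]
    intro i _
    rw [Set.mem_pi]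
    intro j _
    exact hA.1 i j
  have hexp : (n : ℝ) * (ε / n) = ε := by field_simp
  have step : (Set.ncard {A : Matrix (Fin n) (Fin n) ℚ | (∀ i j, A i j ∈ Farey H) ∧ A.det = δ} : ℝ) ≤
      ∑ p ∈ T, ((Cls n h δ p.1 p.2.1 p.2.2).ncard : ℝ) := by
    have a := Set.ncard_le_ncard hsub (Set.Finite.biUnion T.finite_toSet fun p _ => hfin p)
    have b := Finset.set_ncard_biUnion_le T (fun p => Cls n h δ p.1 p.2.1 p.2.2)
    exact_mod_cast a.trans b
  refine step.trans ?_
  rw [mul_assoc, ← nsmul_eq_mul]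
  refine Finset.sum_le_card_nsmul _ _ _ ?_
  intro p hp
  have hp' := (Finset.mem_filter.mp hp).2
  have := hC h hh2 δ p.1 p.2.1 p.2.2 hp'.1 hp'.2
  rw [hexp] at this
  refine this.trans (mul_le_mul_of_nonneg_left ?_ hC0)
  refine Real.rpow_le_rpow (by positivity) hhH ?_
  have : (3 : ℝ) ≤ n := by exact_mod_cast hn
  nlinarith
end

section
/- Let n ≥ 2 be an integer. For every ε > 0 there exists H_0 such that for all real H ≥ H_0 the number of n×n matrices with all entries in F(H) and with determinant equal to 1 is at least H^{n²−ε}. -/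
/-- Coprime pairs in `[1,N]²`. -/
def CoP (N : ℕ) : Finset (ℕ × ℕ) :=
  ((Finset.Ioc 0 N) ×ˢ (Finset.Ioc 0 N)).filter (fun p => Nat.Coprime p.1 p.2)

lemma mem_CoP {N : ℕ} {p : ℕ × ℕ} :
    p ∈ CoP N ↔ ((0 < p.1 ∧ p.1 ≤ N) ∧ (0 < p.2 ∧ p.2 ≤ N)) ∧ Nat.Coprime p.1 p.2 := by
  simp [CoP]

lemma sum_inv_sq (N : ℕ) (hN : 2 ≤ N) :
    ∑ d ∈ Finset.Icc 2 N, (1 : ℝ) / (d : ℝ) ^ 2 ≤ 3 / 4 - 1 / N := by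
  induction N, hN using Nat.le_induction with
  | base => norm_num
  | succ k hk ih =>
    rw [Finset.sum_Icc_succ_top (by omega)]
    have hk0 : (0 : ℝ) < k := by exact_mod_cast (by omega : 0 < k)
    have : (1 : ℝ) / ((k + 1 : ℕ) : ℝ) ^ 2 ≤ 1 / k - 1 / ((k + 1 : ℕ) : ℝ) := by
      push_cast
      rw [div_sub_div _ _ hk0.ne' (by positivity), div_le_div_iff₀ (by positivity) (by positivity)]
      nlinarith
    linarith

lemma card_CoP (N : ℕ) : (N : ℝ) ^ 2 / 4 ≤ ((CoP N).card : ℝ) := by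
  rcases Nat.lt_or_ge N 2 with h | h
  · interval_cases N
    · simp
    · have : (CoP 1).card = 1 := by decide
      rw [this]; norm_num
  classical
  set S := (Finset.Ioc 0 N) ×ˢ (Finset.Ioc 0 N) with hS
  have hsub : S ⊆ CoP N ∪ (Finset.Icc 2 N).biUnion (fun d =>
      ((Finset.Ioc 0 N).filter (fun x => d ∣ x)) ×ˢ ((Finset.Ioc 0 N).filter (fun x => d ∣ x))) := by
    rintro ⟨a, b⟩ hab
    simp only [hS, Finset.mem_product, Finset.mem_Ioc] at hab
    by_cases hc : Nat.Coprime a b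
    · exact Finset.mem_union_left _ (mem_CoP.2 ⟨hab, hc⟩)
    · refine Finset.mem_union_right _ (Finset.mem_biUnion.2 ⟨Nat.gcd a b, ?_, ?_⟩)
      · have h1 : 0 < Nat.gcd a b := Nat.gcd_pos_of_pos_left _ hab.1.1
        have h2 : Nat.gcd a b ≤ a := Nat.gcd_le_left _ hab.1.1
        have h3 : Nat.gcd a b ≠ 1 := hc
        simp only [Finset.mem_Icc]
        omega
      · simp only [Finset.mem_product, Finset.mem_filter, Finset.mem_Ioc]
        exact ⟨⟨hab.1, Nat.gcd_dvd_left _ _⟩, ⟨hab.2, Nat.gcd_dvd_right _ _⟩⟩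
  have h1 := (Finset.card_le_card hsub).trans
    ((Finset.card_union_le _ _).trans (Nat.add_le_add_left Finset.card_biUnion_le _))
  simp only [hS, Finset.card_product, Nat.Ioc_filter_dvd_card_eq_div, Nat.card_Ioc,
    Nat.sub_zero] at h1
  have h2 : ((∑ d ∈ Finset.Icc 2 N, (N / d) * (N / d) : ℕ) : ℝ) ≤ (N : ℝ) ^ 2 * (3 / 4) := by
    calc ((∑ d ∈ Finset.Icc 2 N, (N / d) * (N / d) : ℕ) : ℝ)
        ≤ ∑ d ∈ Finset.Icc 2 N, (N : ℝ) ^ 2 * (1 / (d : ℝ) ^ 2) := by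
          push_cast
          refine Finset.sum_le_sum fun d _ => ?_
          have : ((N / d : ℕ) : ℝ) ≤ (N : ℝ) / d := Nat.cast_div_le
          calc ((N / d : ℕ) : ℝ) * ((N / d : ℕ) : ℝ) ≤ (N : ℝ) / d * ((N : ℝ) / d) := by gcongr
            _ = _ := by ring
      _ = (N : ℝ) ^ 2 * ∑ d ∈ Finset.Icc 2 N, (1 / (d : ℝ) ^ 2) := by rw [Finset.mul_sum]
      _ ≤ _ := by
          have := sum_inv_sq N h
          have h0 : (0 : ℝ) ≤ 1 / N := by positivity
          gcongr
          linarith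
  have h3 : (N : ℝ) * N ≤ (CoP N).card + ((∑ d ∈ Finset.Icc 2 N, (N / d) * (N / d) : ℕ) : ℝ) := by
    exact_mod_cast h1
  nlinarith

lemma Farey_finite (H : ℝ) : (Farey H).Finite := by
  have : Farey H ⊆ (fun p : ℤ × ℤ => (p.1 : ℚ) / (p.2 : ℚ)) ''
      ((Set.Icc (-⌊H⌋) ⌊H⌋) ×ˢ (Set.Icc 0 ⌊H⌋)) := by
    rintro x ⟨h1, h2⟩
    refine ⟨(x.num, (x.den : ℤ)), ?_, ?_⟩
    · rw [abs_le] at h1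
      simp only [Set.mem_prod, Set.mem_Icc]
      refine ⟨⟨?_, Int.le_floor.2 h1.2⟩, by positivity, Int.le_floor.2 (by exact_mod_cast h2)⟩
      have : -x.num ≤ ⌊H⌋ := Int.le_floor.2 (by push_cast; linarith)
      omega
    · simpa using Rat.num_div_den x
  exact (((Set.finite_Icc _ _).prod (Set.finite_Icc _ _)).image _).subset this

lemma mem_Farey {H : ℝ} {a b : ℕ} (ha : (a : ℝ) ≤ H) (hb0 : 0 < b) (hb : (b : ℝ) ≤ H) :
    (a : ℚ) / (b : ℚ) ∈ Farey H := by
  have e : (a : ℚ) / (b : ℚ) = Rat.divInt (a : ℤ) (b : ℤ) := by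
    rw [Rat.divInt_eq_div]; simp
  have hd : (((a : ℚ) / (b : ℚ)).den) ≤ b := by
    have : ((((a : ℚ) / (b : ℚ)).den : ℕ) : ℤ) ∣ (b : ℤ) := by
      rw [e]; exact Rat.den_dvd _ _
    exact Nat.le_of_dvd hb0 (by exact_mod_cast this)
  have hn : |((a : ℚ) / (b : ℚ)).num| ≤ a := by
    rcases Nat.eq_zero_or_pos a with h | h
    · subst h; simp
    · have : ((a : ℚ) / (b : ℚ)).num ∣ (a : ℤ) := by
        rw [e]; exact Rat.num_dvd _ (by exact_mod_cast hb0.ne')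
      exact Int.le_of_dvd (by exact_mod_cast h) ((abs_dvd _ _).2 this)
  refine ⟨?_, ?_⟩
  · have : (|((a : ℚ) / (b : ℚ)).num| : ℝ) ≤ a := by exact_mod_cast hn
    exact this.trans ha
  · exact (by exact_mod_cast hd : (((a : ℚ) / (b : ℚ)).den : ℝ) ≤ b).trans hb

lemma coprime_inj {a b c d : ℕ} (hb : 0 < b) (hd : 0 < d) (h1 : Nat.Coprime a b)
    (h2 : Nat.Coprime c d) (h : (a : ℚ) / b = (c : ℚ) / d) : a = c ∧ b = d := by
  have hb' : (b : ℚ) ≠ 0 := by exact_mod_cast hb.ne'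
  have hd' : (d : ℚ) ≠ 0 := by exact_mod_cast hd.ne'
  rw [div_eq_div_iff hb' hd'] at h
  have h' : a * d = c * b := by exact_mod_cast h
  have hbd : b ∣ d := h1.symm.dvd_of_dvd_mul_left ⟨c, by rw [h']; ring⟩
  have hdb : d ∣ b := h2.symm.dvd_of_dvd_mul_left ⟨a, by rw [← h']; ring⟩
  have e := Nat.dvd_antisymm hbd hdb
  subst e
  exact ⟨Nat.eq_of_mul_eq_mul_right hb h', rfl⟩

/-- Parameter space. -/
abbrev Par (m N : ℕ) : Type :=
  (CoP N) × (Fin m → Finset.Ioc 0 N) × ((Σ i : Fin (m + 2), Fin i) → CoP N)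

/-- The diagonal sequence. -/
def seqX {m N : ℕ} (p : Par m N) : Fin (m + 2) → ℕ :=
  Fin.cons p.1.1.1 (Fin.cons p.1.1.2 (fun i => (p.2.1 i).1))

lemma seqX_bd {m N : ℕ} (p : Par m N) (i : Fin (m + 2)) : 0 < seqX p i ∧ seqX p i ≤ N := by
  have h := (mem_CoP.1 p.1.2).1
  refine Fin.cases ?_ (fun i => Fin.cases ?_ (fun i => ?_) i) i
  · exact h.1
  · exact h.2
  · simpa [seqX] using Finset.mem_Ioc.1 (p.2.1 i).2

/-- The matrix attached to a parameter. -/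
def matA {m N : ℕ} (p : Par m N) : Matrix (Fin (m + 2)) (Fin (m + 2)) ℚ := fun i j =>
  if h : j < i then
    (((p.2.2 ⟨i, ⟨j.1, h⟩⟩).1.1 : ℕ) : ℚ) / (((p.2.2 ⟨i, ⟨j.1, h⟩⟩).1.2 : ℕ) : ℚ)
  else if i = j then (seqX p i : ℚ) / (seqX p (i + 1) : ℚ) else 0

lemma matA_det {m N : ℕ} (p : Par m N) : (matA p).det = 1 := by
  rw [Matrix.det_of_lowerTriangular]
  · have : ∀ i, matA p i i = (seqX p i : ℚ) / (seqX p (i + 1) : ℚ) := by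
      intro i; simp [matA]
    simp only [this]
    rw [Finset.prod_div_distrib]
    have e := Equiv.prod_comp (Equiv.addRight (1 : Fin (m + 2))) (fun i => (seqX p i : ℚ))
    simp only [Equiv.coe_addRight] at e
    rw [e]
    refine div_self (Finset.prod_ne_zero_iff.2 fun i _ => ?_)
    exact_mod_cast (seqX_bd p i).1.ne'
  · intro i j hij
    have hij : i < j := hij
    simp [matA, hij.ne, hij.le]

lemma matA_mem {m N : ℕ} {H : ℝ} (hN : (N : ℝ) ≤ H) (h1 : 1 ≤ H) (p : Par m N)
    (i j : Fin (m + 2)) : matA p i j ∈ Farey H := by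
  have key : ∀ a : ℕ, a ≤ N → (a : ℝ) ≤ H := fun a ha =>
    (by exact_mod_cast ha : (a : ℝ) ≤ N).trans hN
  unfold matA
  split_ifs with h h'
  · have := (mem_CoP.1 (p.2.2 ⟨i, ⟨j.1, h⟩⟩).2).1
    exact mem_Farey (key _ this.1.2) this.2.1 (key _ this.2.2)
  · exact mem_Farey (key _ (seqX_bd p _).2) (seqX_bd p _).1 (key _ (seqX_bd p _).2)
  · exact ⟨by simp; linarith, by simpa using h1⟩

lemma matA_inj (m N : ℕ) : Function.Injective (matA : Par m N → _) := by
  intro p q hpq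
  have hlow : p.2.2 = q.2.2 := by
    funext ⟨i, j⟩
    have hlt : (⟨j.1, j.2.trans i.2⟩ : Fin (m + 2)) < i := j.2
    have h := congrFun (congrFun hpq i) ⟨j.1, j.2.trans i.2⟩
    simp only [matA, hlt, dif_pos] at h
    have a := mem_CoP.1 (p.2.2 ⟨i, j⟩).2
    have b := mem_CoP.1 (q.2.2 ⟨i, j⟩).2
    have c := coprime_inj a.1.2.1 b.1.2.1 a.2 b.2 h
    exact Subtype.ext (Prod.ext c.1 c.2)
  have hdiag : ∀ i, (seqX p i : ℚ) / (seqX p (i + 1) : ℚ)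
      = (seqX q i : ℚ) / (seqX q (i + 1) : ℚ) := by
    intro i
    have h := congrFun (congrFun hpq i) i
    simpa [matA] using h
  have h01 : p.1.1.1 = q.1.1.1 ∧ p.1.1.2 = q.1.1.2 := by
    have h := hdiag 0
    have a := mem_CoP.1 p.1.2
    have b := mem_CoP.1 q.1.2
    rw [zero_add] at h
    exact coprime_inj a.1.2.1 b.1.2.1 a.2 b.2 h
  have hx : ∀ i, seqX p i = seqX q i := by
    intro i
    induction i using Fin.induction with
    | zero => exact h01.1
    | succ i ih =>
      have h := hdiag i.castSucc
      rw [ih, Fin.coeSucc_eq_succ] at h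
      have h0 : (seqX q i.castSucc : ℚ) ≠ 0 := by exact_mod_cast (seqX_bd q _).1.ne'
      have h1 : (seqX p i.succ : ℚ) ≠ 0 := by exact_mod_cast (seqX_bd p _).1.ne'
      have h2 : (seqX q i.succ : ℚ) ≠ 0 := by exact_mod_cast (seqX_bd q _).1.ne'
      rw [div_eq_div_iff h1 h2] at h
      exact_mod_cast (mul_left_cancel₀ h0 h).symm
  refine Prod.ext (Subtype.ext (Prod.ext h01.1 h01.2)) (Prod.ext ?_ hlow)
  funext i
  exact Subtype.ext (by simpa [seqX] using hx i.succ.succ)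

lemma card_Par (m N : ℕ) : ∃ k : ℕ, 2 * k + (m + 2) = (m + 2) ^ 2 ∧
    Nat.card (Par m N) = (CoP N).card * (N ^ m * (CoP N).card ^ k) := by
  refine ⟨∑ i ∈ Finset.range (m + 2), i, ?_, ?_⟩
  · have := Finset.sum_range_id_mul_two (m + 2)
    have e : m + 2 - 1 = m + 1 := rfl
    rw [e] at this
    nlinarith
  · rw [Nat.card_eq_fintype_card]
    simp [Fintype.card_sigma, Fin.sum_univ_eq_sum_range (fun i => i)]

theorem stmt5 (n : ℕ) (hn : n ≥ 2) :
    ∀ ε > (0 : ℝ), ∃ H₀ : ℝ, ∀ H : ℝ, H ≥ H₀ →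
      H ^ ((n ^ 2 : ℝ) - ε) ≤
        (Set.ncard {A : Matrix (Fin n) (Fin n) ℚ |
            (∀ i j, A i j ∈ Farey H) ∧ A.det = 1} : ℝ) := by
  intro ε hε
  obtain ⟨m, rfl⟩ : ∃ m, n = m + 2 := ⟨n - 2, by omega⟩
  obtain ⟨k, hk, -⟩ := card_Par m 0
  set C : ℝ := 4 ^ (k + 1) * 2 ^ ((m + 2) ^ 2) with hC
  have hC0 : 0 < C := by positivity
  refine ⟨max 1 (C ^ (1 / ε)), fun H hH => ?_⟩
  have hH1 : 1 ≤ H := (le_max_left _ _).trans hH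
  have hH0 : 0 < H := by linarith
  have hHC : C ≤ H ^ ε := by
    have h1 : C ^ (1 / ε) ≤ H := (le_max_right _ _).trans hH
    calc C = (C ^ (1 / ε)) ^ ε := by
          rw [← Real.rpow_mul hC0.le, one_div_mul_cancel hε.ne', Real.rpow_one]
      _ ≤ H ^ ε := Real.rpow_le_rpow (by positivity) h1 hε.le
  set N := ⌊H⌋₊ with hN
  have hNH : (N : ℝ) ≤ H := Nat.floor_le hH0.le
  have hN2 : H / 2 ≤ N := by
    have h1 : H < N + 1 := Nat.lt_floor_add_one H
    have h2 : (1 : ℝ) ≤ N := by exact_mod_cast (Nat.one_le_floor_iff H).2 hH1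
    linarith
  have hfin : {A : Matrix (Fin (m + 2)) (Fin (m + 2)) ℚ |
      (∀ i j, A i j ∈ Farey H) ∧ A.det = 1}.Finite := by
    have h : {A : Matrix (Fin (m + 2)) (Fin (m + 2)) ℚ | ∀ i, A i ∈
        {r : Fin (m + 2) → ℚ | ∀ j, r j ∈ Farey H}}.Finite :=
      Set.Finite.pi' fun _ => Set.Finite.pi' fun _ => Farey_finite H
    exact h.subset fun A hA => hA.1
  have hcard : Nat.card (Par m N) ≤ Set.ncard {A : Matrix (Fin (m + 2)) (Fin (m + 2)) ℚ |
      (∀ i j, A i j ∈ Farey H) ∧ A.det = 1} := by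
    rw [← Set.ncard_univ, ← Set.ncard_image_of_injective _ (matA_inj m N)]
    refine Set.ncard_le_ncard ?_ hfin
    rintro _ ⟨p, -, rfl⟩
    exact ⟨matA_mem hNH hH1 p, matA_det p⟩
  obtain ⟨k', hk', hP⟩ := card_Par m N
  obtain rfl : k' = k := by omega
  have hlow : H ^ ((m + 2) ^ 2) / C ≤ (Nat.card (Par m N) : ℝ) := by
    rw [hP]
    push_cast
    have hc := card_CoP N
    calc H ^ ((m + 2) ^ 2) / C = (H / 2) ^ ((m + 2) ^ 2) / 4 ^ (k' + 1) := by
          rw [hC, div_pow]; field_simp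
      _ ≤ (N : ℝ) ^ ((m + 2) ^ 2) / 4 ^ (k' + 1) := by gcongr
      _ = ((N : ℝ) ^ 2 / 4) * ((N : ℝ) ^ m * ((N : ℝ) ^ 2 / 4) ^ k') := by
          rw [← hk, div_pow, ← pow_mul]; field_simp; ring
      _ ≤ _ := by gcongr
  calc H ^ ((((m + 2 : ℕ) : ℝ)) ^ 2 - ε) = H ^ ((m + 2) ^ 2) / H ^ ε := by
        rw [Real.rpow_sub hH0]
        congr 1
        rw [← Real.rpow_natCast H ((m + 2) ^ 2)]; push_cast; rfl
    _ ≤ H ^ ((m + 2) ^ 2) / C := by gcongr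
    _ ≤ (Nat.card (Par m N) : ℝ) := hlow
    _ ≤ _ := by exact_mod_cast hcard
end
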